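/- arXiv:1703.04379 — 2 statements merged into one kernel-verified Lean document; each statement's English description precedes it below -/
import Mathlib

section
/- Let γ > 0 and γ_α > 0. The density p(θ,r,α,r_α) = exp(−H_e(θ,r,α,r_α)) is annihilated by the Fokker–Planck operator of the continuously tempered Langevin dynamics: for every (θ,r,α,r_α) ∈ ℝ^d × ℝ^d × ℝ × ℝ, −∑_{i=1}^d r_i ∂_{θ_i} p + ∑_{i=1}^d ∂_{r_i}[(∂_{θ_i}U(θ) + γ r_i) p] − r_α ∂_α p + ∂_{r_α}[(γ_α r_α − h(θ,r,α)) p] + (γ / g(α)) ∑_{i=1}^d ∂²_{r_i} p + γ_α ∂²_{r_α} p = 0. Hence exp(−H_e) is a stationary (unnormalized) density of the dynamics dθ = r dt, dr = −∇U(θ) dt − γ r dt + √(2γ/g(α)) dW, dα = r_α dt, dr_α = h dt − γ_α r_α dt + √(2γ_α) dW_α. -/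
open scoped BigOperators

/-- Partial derivative of `f : (Fin d → ℝ) → ℝ` at `x` in the `i`-th coordinate. -/
noncomputable def pd {d : ℕ} (f : (Fin d → ℝ) → ℝ) (x : Fin d → ℝ) (i : Fin d) : ℝ :=
  deriv (fun s => f (Function.update x i s)) (x i)

/-- The Hamiltonian `H(θ,r) = U(θ) + ‖r‖²/2`. -/
noncomputable def Hfun {d : ℕ} (U : (Fin d → ℝ) → ℝ) (θ r : Fin d → ℝ) : ℝ :=
  U θ + (∑ i, (r i) ^ 2) / 2

/-- The extended Hamiltonian `H_e(θ,r,α,r_α) = g(α)H(θ,r) + φ(α) + r_α²/2`. -/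
noncomputable def Hext {d : ℕ} (U : (Fin d → ℝ) → ℝ) (g φ : ℝ → ℝ)
    (θ r : Fin d → ℝ) (a ra : ℝ) : ℝ :=
  g a * Hfun U θ r + φ a + ra ^ 2 / 2

/-- The coupling function `h(θ,r,α) = −g′(α)H(θ,r) − φ′(α)`. -/
noncomputable def hcpl {d : ℕ} (U : (Fin d → ℝ) → ℝ) (g φ : ℝ → ℝ)
    (θ r : Fin d → ℝ) (a : ℝ) : ℝ :=
  -(deriv g a) * Hfun U θ r - deriv φ a

/-- The unnormalized stationary density `p = exp(−H_e)`. -/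
noncomputable def pdens {d : ℕ} (U : (Fin d → ℝ) → ℝ) (g φ : ℝ → ℝ)
    (θ r : Fin d → ℝ) (a ra : ℝ) : ℝ :=
  Real.exp (-(Hext U g φ θ r a ra))

/-!
The Fokker–Planck operator splits into one block per position–momentum pair: `(θ i, r i)` for each
`i`, and `(α, r_α)`. As a function of its momentum variable `s` alone, `p` is a Gaussian of some
precision `k`, i.e. `p' = -k s p`, with `k = g(α)` for `r i` and `k = 1` for `r_α`. Hence the
friction flux `γ s p` and the diffusion flux `(γ / k) p'` cancel, and only the Hamiltonian transport
remains in each block. It cancels too: it is `-(∂H_e/∂r) ∂p/∂θ + (∂H_e/∂θ) ∂p/∂r`, up to the factor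
`1 / g(α)` in the blocks `(θ i, r i)`, and `p` is a function of `H_e`.
-/

theorem hasDerivAt_comp_update_pd {d : ℕ} {f : (Fin d → ℝ) → ℝ} {x : Fin d → ℝ}
    (hf : DifferentiableAt ℝ f x) (i : Fin d) :
    HasDerivAt (fun s => f (Function.update x i s)) (pd f x i) (x i) := by
  rw [← Function.update_eq_self i x] at hf
  exact (hf.comp (x i) (hasDerivAt_update x i (x i)).differentiableAt).hasDerivAt

theorem pd_pd_self {d : ℕ} (f : (Fin d → ℝ) → ℝ) (x : Fin d → ℝ) (i : Fin d) :
    pd (fun y => pd f y i) x i = deriv (deriv fun s => f (Function.update x i s)) (x i) := by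
  simp only [pd, Function.update_idem, Function.update_self]

theorem hasDerivAt_half_sum_sq_update {ι : Type*} [Fintype ι] [DecidableEq ι] (x : ι → ℝ) (i : ι)
    (s : ℝ) : HasDerivAt (fun t => (∑ j, Function.update x i t j ^ 2) / 2) s s := by
  have hcoord := hasDerivAt_pi.1 (hasDerivAt_update x i s)
  refine ((HasDerivAt.fun_sum fun j _ => (hcoord j).fun_pow 2).div_const 2).congr_deriv ?_
  simp [Pi.single_apply]

theorem deriv_affine_mul_add_deriv_deriv_of_gaussian {p : ℝ → ℝ} {k : ℝ} (hk : k ≠ 0)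
    (hp : ∀ s, HasDerivAt p (-(k * s) * p s) s) (c γ x : ℝ) :
    deriv (fun s => (c + γ * s) * p s) x + γ / k * deriv (deriv p) x
      = c * (-(k * x) * p x) := by
  have hdiff : Differentiable ℝ p := fun s => (hp s).differentiableAt
  have flux_cancel : ∀ s, γ / k * deriv p s = -(γ * s * p s) := fun s => by
    rw [(hp s).deriv]
    field_simp
  have diffusion_eq : γ / k * deriv (deriv p) x = -deriv (fun s => γ * s * p s) x := by
    rw [← deriv_const_mul_field, ← deriv.fun_neg]
    simp only [flux_cancel]
  have drift_eq : deriv (fun s => (c + γ * s) * p s) x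
      = c * deriv p x + deriv (fun s => γ * s * p s) x := by
    simp only [add_mul]
    rw [deriv_fun_add (by fun_prop) (by fun_prop), deriv_const_mul_field]
  rw [drift_eq, diffusion_eq, add_neg_cancel_right, (hp x).deriv]

section Density

variable {d : ℕ} {U : (Fin d → ℝ) → ℝ} {g φ : ℝ → ℝ} {θ : Fin d → ℝ} {a : ℝ}

theorem hasDerivAt_pdens_position (hU : DifferentiableAt ℝ U θ) (g φ : ℝ → ℝ)
    (r : Fin d → ℝ) (a ra : ℝ) (i : Fin d) :
    HasDerivAt (fun s => pdens U g φ (Function.update θ i s) r a ra)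
      (-(g a * pd U θ i) * pdens U g φ θ r a ra) (θ i) := by
  have hH : HasDerivAt (fun s => Hext U g φ (Function.update θ i s) r a ra)
      (g a * pd U θ i) (θ i) :=
    ((hasDerivAt_comp_update_pd hU i).add_const _).const_mul (g a)
      |>.add_const _ |>.add_const _
  refine hH.fun_neg.exp.congr_deriv ?_
  rw [Function.update_eq_self, mul_comm, pdens]

theorem hasDerivAt_pdens_momentum (U : (Fin d → ℝ) → ℝ) (g φ : ℝ → ℝ)
    (θ r : Fin d → ℝ) (a ra : ℝ) (i : Fin d) (s : ℝ) :
    HasDerivAt (fun t => pdens U g φ θ (Function.update r i t) a ra)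
      (-(g a * s) * pdens U g φ θ (Function.update r i s) a ra) s := by
  have hH : HasDerivAt (fun t => Hext U g φ θ (Function.update r i t) a ra)
      (g a * s) s :=
    ((hasDerivAt_half_sum_sq_update r i s).const_add (U θ)).const_mul (g a)
      |>.add_const _ |>.add_const _
  refine hH.fun_neg.exp.congr_deriv ?_
  rw [mul_comm, pdens]

theorem hasDerivAt_pdens_tempering (hg : DifferentiableAt ℝ g a) (hφ : DifferentiableAt ℝ φ a)
    (U : (Fin d → ℝ) → ℝ) (θ r : Fin d → ℝ) (ra : ℝ) :
    HasDerivAt (fun s => pdens U g φ θ r s ra)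
      (hcpl U g φ θ r a * pdens U g φ θ r a ra) a := by
  have hH : HasDerivAt (fun s => Hext U g φ θ r s ra)
      (deriv g a * Hfun U θ r + deriv φ a) a :=
    ((hg.hasDerivAt.mul_const (Hfun U θ r)).fun_add hφ.hasDerivAt).add_const _
  refine hH.fun_neg.exp.congr_deriv ?_
  rw [pdens, hcpl]
  ring

theorem hasDerivAt_pdens_temperingMomentum (U : (Fin d → ℝ) → ℝ) (g φ : ℝ → ℝ)
    (θ r : Fin d → ℝ) (a s : ℝ) :
    HasDerivAt (pdens U g φ θ r a) (-s * pdens U g φ θ r a s) s := by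
  have hH : HasDerivAt (Hext U g φ θ r a) s s :=
    (((hasDerivAt_pow 2 s).div_const 2).const_add (g a * Hfun U θ r + φ a)).congr_deriv (by simp)
  refine hH.fun_neg.exp.congr_deriv ?_
  rw [mul_comm, pdens]

theorem fokkerPlanck_position_momentum_eq_zero (hU : DifferentiableAt ℝ U θ) (hga : g a ≠ 0)
    (φ : ℝ → ℝ) (γ : ℝ) (r : Fin d → ℝ) (ra : ℝ) (i : Fin d) :
    -(r i * pd (fun θ' => pdens U g φ θ' r a ra) θ i)
      + pd (fun r' => (pd U θ i + γ * r' i) * pdens U g φ θ r' a ra) r i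
      + γ / g a * pd (fun r' => pd (fun r'' => pdens U g φ θ r'' a ra) r' i) r i = 0 := by
  have transport : pd (fun θ' => pdens U g φ θ' r a ra) θ i
      = -(g a * pd U θ i) * pdens U g φ θ r a ra :=
    (hasDerivAt_pdens_position hU g φ r a ra i).deriv
  have momentum := deriv_affine_mul_add_deriv_deriv_of_gaussian hga
    (hasDerivAt_pdens_momentum U g φ θ r a ra i) (pd U θ i) γ (r i)
  have drift : pd (fun r' => (pd U θ i + γ * r' i) * pdens U g φ θ r' a ra) r i
      = deriv (fun s => (pd U θ i + γ * s) * pdens U g φ θ (Function.update r i s) a ra) (r i) := by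
    rw [pd]
    simp only [Function.update_self]
  rw [Function.update_eq_self] at momentum
  rw [transport, drift, pd_pd_self, add_assoc, momentum]
  ring

theorem fokkerPlanck_tempering_eq_zero (hg : DifferentiableAt ℝ g a)
    (hφ : DifferentiableAt ℝ φ a) (U : (Fin d → ℝ) → ℝ) (γα : ℝ) (θ r : Fin d → ℝ) (ra : ℝ) :
    -(ra * deriv (fun s => pdens U g φ θ r s ra) a)
      + deriv (fun s => (γα * s - hcpl U g φ θ r a) * pdens U g φ θ r a s) ra
      + γα * deriv (deriv (fun s => pdens U g φ θ r a s)) ra = 0 := by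
  have momentum := deriv_affine_mul_add_deriv_deriv_of_gaussian (p := pdens U g φ θ r a) one_ne_zero
    (fun s => by simpa only [one_mul] using hasDerivAt_pdens_temperingMomentum U g φ θ r a s)
    (-hcpl U g φ θ r a) γα ra
  simp only [neg_add_eq_sub, div_one, one_mul] at momentum
  rw [(hasDerivAt_pdens_tempering hg hφ U θ r ra).deriv, add_assoc, momentum]
  ring

theorem ctld_stationary_density_general (hU : DifferentiableAt ℝ U θ)
    (hg : DifferentiableAt ℝ g a) (hφ : DifferentiableAt ℝ φ a) (hga : g a ≠ 0)
    (γ γα : ℝ) (r : Fin d → ℝ) (ra : ℝ) :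
    -(∑ i, r i * pd (fun θ' => pdens U g φ θ' r a ra) θ i)
      + (∑ i, pd (fun r' => (pd U θ i + γ * r' i) * pdens U g φ θ r' a ra) r i)
      - ra * deriv (fun s => pdens U g φ θ r s ra) a
      + deriv (fun s => (γα * s - hcpl U g φ θ r a) * pdens U g φ θ r a s) ra
      + (γ / g a) * (∑ i, pd (fun r' => pd (fun r'' => pdens U g φ θ r'' a ra) r' i) r i)
      + γα * deriv (deriv (fun s => pdens U g φ θ r a s)) ra = 0 := by
  have position_momentum := Finset.sum_eq_zero fun i (_ : i ∈ Finset.univ) =>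
    fokkerPlanck_position_momentum_eq_zero hU hga φ γ r ra i
  rw [Finset.sum_add_distrib, Finset.sum_add_distrib, Finset.sum_neg_distrib,
    ← Finset.mul_sum] at position_momentum
  linear_combination position_momentum + fokkerPlanck_tempering_eq_zero hg hφ U γα θ r ra

end Density

/-- The density `p = exp(−H_e)` is annihilated by the Fokker–Planck operator of the
continuously tempered Langevin dynamics
`dθ = r dt, dr = −∇U dt − γ r dt + √(2γ/g(α)) dW, dα = r_α dt,
 dr_α = h dt − γ_α r_α dt + √(2γ_α) dW_α`;
hence `exp(−H_e)` is a stationary (unnormalized) density of this dynamics. -/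
theorem ctld_stationary_density
    {d : ℕ} (hd : 1 ≤ d)
    (U : (Fin d → ℝ) → ℝ) (hU : ContDiff ℝ 1 U)
    (g φ : ℝ → ℝ) (hg : ContDiff ℝ 1 g) (hφ : ContDiff ℝ 1 φ)
    (hgpos : ∀ a : ℝ, 0 < g a)
    (γ γα : ℝ) (hγ : 0 < γ) (hγα : 0 < γα) :
    ∀ (θ r : Fin d → ℝ) (a ra : ℝ),
      -(∑ i, r i * pd (fun θ' => pdens U g φ θ' r a ra) θ i)
      + (∑ i, pd (fun r' => (pd U θ i + γ * r' i) * pdens U g φ θ r' a ra) r i)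
      - ra * deriv (fun s => pdens U g φ θ r s ra) a
      + deriv (fun s => (γα * s - hcpl U g φ θ r a) * pdens U g φ θ r a s) ra
      + (γ / g a) * (∑ i, pd (fun r' => pd (fun r'' => pdens U g φ θ r'' a ra) r' i) r i)
      + γα * deriv (deriv (fun s => pdens U g φ θ r a s)) ra = 0 := by
  intro θ r a ra
  exact ctld_stationary_density_general (hU.differentiable one_ne_zero θ)
    (hg.differentiable one_ne_zero a) (hφ.differentiable one_ne_zero a) (hgpos a).ne' γ γα r ra
end

section
/- On the slice where the temperature scaling equals one, the extended stationary density recovers the desired target distribution over θ: for every α with g(α) = 1 and every θ ∈ ℝ^d, ∫_ℝ ∫_{ℝ^d} exp(−H_e(θ, r, α, r_α)) dr dr_α = (2π)^{(d+1)/2} · exp(−φ(α)) · exp(−U(θ)); in particular, conditioned on g(α) = 1, the marginal density of θ under exp(−H_e) is proportional to exp(−U(θ)). -/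
open MeasureTheory

section

open Module

variable {Θ V : Type*} [NormedAddCommGroup V]

/-- The Hamiltonian `H(θ, r) = U(θ) + ‖r‖² / 2` of a unit-mass particle in the potential `U`. Only
the momentum `r` is required to lie in a normed space; the position `θ` is a mere parameter. -/
noncomputable def hamiltonian (U : Θ → ℝ) (θ : Θ) (r : V) : ℝ :=
  U θ + ‖r‖ ^ 2 / 2

/-- The extended Hamiltonian `H_e(θ, r, α, r_α) = g(α) H(θ, r) + φ(α) + r_α² / 2`, in which the
temperature variable `α`, with momentum `r_α`, rescales `H` by `g(α)` and is confined by `φ`. -/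
noncomputable def extendedHamiltonian (U : Θ → ℝ) (g φ : ℝ → ℝ) (θ : Θ) (r : V) (α rα : ℝ) : ℝ :=
  g α * hamiltonian U θ r + φ α + rα ^ 2 / 2

theorem exp_neg_extendedHamiltonian (U : Θ → ℝ) (g φ : ℝ → ℝ) (θ : Θ) (r : V) (α rα : ℝ) :
    Real.exp (-extendedHamiltonian U g φ θ r α rα) =
      Real.exp (-φ α) * Real.exp (-(rα ^ 2 / 2)) * Real.exp (-(g α * hamiltonian U θ r)) := by
  rw [← Real.exp_add, ← Real.exp_add, extendedHamiltonian]
  ring_nf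

theorem integral_exp_neg_sq_div_two :
    ∫ x : ℝ, Real.exp (-(x ^ 2 / 2)) = (2 * Real.pi) ^ ((1 : ℝ) / 2) := by
  calc ∫ x : ℝ, Real.exp (-(x ^ 2 / 2))
    _ = ∫ x : ℝ, Real.exp (-(1 / 2) * x ^ 2) := by ring_nf
    _ = √(Real.pi / (1 / 2)) := integral_gaussian (1 / 2)
    _ = (2 * Real.pi) ^ ((1 : ℝ) / 2) := by rw [Real.sqrt_eq_rpow]; ring_nf

variable [InnerProductSpace ℝ V] [FiniteDimensional ℝ V] [MeasurableSpace V] [BorelSpace V]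

theorem integral_exp_neg_mul_hamiltonian (U : Θ → ℝ) (θ : Θ) {c : ℝ} (hc : 0 < c) :
    ∫ r : V, Real.exp (-(c * hamiltonian U θ r)) =
      Real.exp (-(c * U θ)) * (2 * Real.pi / c) ^ ((finrank ℝ V : ℝ) / 2) := by
  have exp_split (r : V) : Real.exp (-(c * hamiltonian U θ r)) =
      Real.exp (-(c * U θ)) * Real.exp (-(c / 2) * ‖r‖ ^ 2) := by
    rw [← Real.exp_add, hamiltonian]
    ring_nf
  have pi_div_half : Real.pi / (c / 2) = 2 * Real.pi / c := by
    field_simp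
  simp_rw [exp_split, integral_const_mul]
  rw [GaussianFourier.integral_rexp_neg_mul_sq_norm (half_pos hc), pi_div_half]

theorem extended_density_target_marginal_general (U : Θ → ℝ) (g φ : ℝ → ℝ) (θ : Θ) {α : ℝ}
    (hα : 0 < g α) :
    ∫ rα : ℝ, ∫ r : V, Real.exp (-extendedHamiltonian U g φ θ r α rα) =
      (2 * Real.pi) ^ (((finrank ℝ V : ℝ) + 1) / 2) / g α ^ ((finrank ℝ V : ℝ) / 2) *
        Real.exp (-φ α) * Real.exp (-(g α * U θ)) := by
  simp_rw [exp_neg_extendedHamiltonian, integral_const_mul,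
    integral_exp_neg_mul_hamiltonian U θ hα, integral_mul_const, integral_const_mul,
    integral_exp_neg_sq_div_two]
  rw [Real.div_rpow (by positivity) hα.le, add_div, Real.rpow_add (by positivity)]
  ring

end

/-- On the slice where the temperature scaling equals one, the extended stationary density
`exp(−H_e)`, with `H_e(θ,r,α,r_α) = g(α)(U(θ) + ‖r‖²/2) + φ(α) + r_α²/2`, recovers the
desired target distribution over `θ`: for every `α` with `g(α) = 1` and every `θ`,
`∫∫ exp(−H_e(θ,r,α,r_α)) dr dr_α = (2π)^{(d+1)/2} exp(−φ(α)) exp(−U(θ))`; in particular,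
conditioned on `g(α) = 1`, the marginal density of `θ` is proportional to `exp(−U(θ))`. -/
theorem extended_density_target_marginal
    {d : ℕ} (hd : 1 ≤ d)
    (U : EuclideanSpace ℝ (Fin d) → ℝ) (hU : Measurable U)
    (g φ : ℝ → ℝ) :
    ∀ α : ℝ, g α = 1 →
      ∀ θ : EuclideanSpace ℝ (Fin d),
        ∫ rα : ℝ, ∫ r : EuclideanSpace ℝ (Fin d),
            Real.exp (-(g α * (U θ + ‖r‖ ^ 2 / 2) + φ α + rα ^ 2 / 2))
          = (2 * Real.pi) ^ (((d : ℝ) + 1) / 2) * Real.exp (-(φ α)) * Real.exp (-(U θ)) := by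
  intro α hα θ
  have hα_pos : 0 < g α := hα ▸ one_pos
  simpa [extendedHamiltonian, hamiltonian, hα] using
    extended_density_target_marginal_general (V := EuclideanSpace ℝ (Fin d)) U g φ θ hα_pos
end
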